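/- Let Δ be a centrally symmetric simplicial complex on V ⊆ {±1,...,±n} and Θ as in the main theorem (all but possibly the last linear form anti-symmetric, the last anti-symmetric or the all-ones form). If for some i > 1 all i-stresses are symmetric and some nonzero j-stress exists for some j > i, then Δ contains the boundary complex of the j-cross-polytope as a subcomplex: there exist distinct indices k_1, ..., k_j such that every subset of {±k_1, ..., ±k_j} containing no antipodal pair is a face of Δ. -/

import Mathlib

open MvPolynomial

/-- The directional-derivative operator `∂_θ = ∑_v θ(v) ∂/∂x_v`. -/
noncomputable def Dop {V : Type*} [Fintype V] (θ : V → ℝ)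
    (w : MvPolynomial V ℝ) : MvPolynomial V ℝ :=
  ∑ v : V, θ v • pderiv v w

/-- A `j`-stress on `Δ` w.r.t. the linear forms `Θ`. -/
def IsStress (n ℓ j : ℕ) (Δ : Finset (Finset (Fin n × Bool)))
    (Θ : Fin ℓ → (Fin n × Bool) → ℝ) (w : MvPolynomial (Fin n × Bool) ℝ) : Prop :=
  w.IsHomogeneous j ∧ (∀ m ∈ w.support, m.support ∈ Δ) ∧ ∀ k : Fin ℓ, Dop (Θ k) w = 0

/-!
Write `-v` for the antipode of `v` and `∂_v` for the partial derivatives. Let `w` be an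
`(i+1)`-stress. Each `∂_v w` is an `i`-stress, hence symmetric, and this gives
`∂_u ∂_v w = ∂_{-u} ∂_{-v} w` and `∂_v ∂_v w = 0`. Now `g = ∂_q ∂_p w - ∂_{-q} ∂_p w` is
antisymmetric, while `z = (x_p + x_{-p}) - (x_q + x_{-q})` is symmetric and killed by every `∂_θ`.
The product `z * g` is again supported on faces, so it is an `i`-stress which is both symmetric and
antisymmetric, and `g = 0`. Therefore `∂_v w = ∂_{-v} w` for every `v`, and this property
propagates to stresses of all higher degrees. For a nonzero `j`-stress it says that every monomial
in its support is squarefree and remains in the support when a vertex is replaced by its antipode;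
starting from one such monomial, all facets of a `j`-cross-polytope are reached.
-/

section DirectionalDerivative

variable {V R : Type*} [CommRing R]

/-- The directional derivative `∂_θ` along a linear form `θ`, as the derivation of the polynomial
ring with `x_v ↦ θ v`. In contrast to a sum over all variables, this makes sense for infinite
`V`. -/
noncomputable def dirDeriv (θ : V → R) : Derivation R (MvPolynomial V R) (MvPolynomial V R) :=
  mkDerivation R fun v => C (θ v)

@[simp]
lemma dirDeriv_X (θ : V → R) (v : V) : dirDeriv θ (X v) = C (θ v) :=
  mkDerivation_X R _ v

lemma dirDeriv_single [DecidableEq V] (v : V) : dirDeriv (Pi.single v (1 : R)) = pderiv v :=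
  derivation_ext fun u => by
    simp [pderiv_X, Pi.single_apply, apply_ite C]

lemma dirDeriv_comm (θ φ : V → R) (w : MvPolynomial V R) :
    dirDeriv θ (dirDeriv φ w) = dirDeriv φ (dirDeriv θ w) := by
  have commutator_eq_zero : ⁅dirDeriv θ, dirDeriv φ⁆ = 0 :=
    derivation_ext fun v => by simp [Derivation.commutator_apply]
  rw [← sub_eq_zero, ← Derivation.commutator_apply, commutator_eq_zero, Derivation.zero_apply]

lemma dirDeriv_pderiv_comm (θ : V → R) (v : V) (w : MvPolynomial V R) :
    dirDeriv θ (pderiv v w) = pderiv v (dirDeriv θ w) := by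
  classical rw [← dirDeriv_single, dirDeriv_comm]

lemma pderiv_pderiv_comm (u v : V) (w : MvPolynomial V R) :
    pderiv u (pderiv v w) = pderiv v (pderiv u w) := by
  classical rw [← dirDeriv_single u, dirDeriv_pderiv_comm]

lemma dirDeriv_eq_Dop [Fintype V] (θ : V → ℝ) (w : MvPolynomial V ℝ) :
    dirDeriv θ w = Dop θ w := by
  classical
  have sum_apply (f : MvPolynomial V ℝ) : (∑ v, θ v • pderiv v) f = Dop θ f := by
    rw [← Derivation.coeFnAddMonoidHom_apply, map_sum, Finset.sum_apply]
    rfl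
  have eq_sum : dirDeriv θ = ∑ v, θ v • pderiv v :=
    derivation_ext fun u => by
      simp [sum_apply, Dop, pderiv_X, Pi.single_apply, C_eq_smul_one]
  rw [eq_sum, sum_apply]

end DirectionalDerivative

section PartialDerivativeSupport

variable {V R : Type*} [CommRing R]

lemma add_single_mem_support_of_mem_support_pderiv {v : V} {w : MvPolynomial V R} {m : V →₀ ℕ}
    (hm : m ∈ (pderiv v w).support) : m + Finsupp.single v 1 ∈ w.support := by
  rw [mem_support_iff, coeff_pderiv] at hm
  exact mem_support_iff.mpr (left_ne_zero_of_mul hm)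

lemma mem_support_of_mem_support_X_mul_pderiv {v : V} {w : MvPolynomial V R} {m : V →₀ ℕ}
    (hm : m ∈ (X v * pderiv v w).support) : m ∈ w.support := by
  classical
  rw [mem_support_iff, coeff_X_mul', ite_ne_right_iff] at hm
  obtain ⟨hv, hm⟩ := hm
  rw [← Finsupp.sub_add_single_one_cancel (Finsupp.mem_support_iff.mp hv)]
  exact add_single_mem_support_of_mem_support_pderiv (mem_support_iff.mpr hm)

variable [IsDomain R] [CharZero R]

lemma mem_support_pderiv_iff {v : V} {w : MvPolynomial V R} {m : V →₀ ℕ} :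
    m ∈ (pderiv v w).support ↔ m + Finsupp.single v 1 ∈ w.support := by
  simp [coeff_pderiv, Nat.cast_add_one_ne_zero]

lemma sub_single_mem_support_pderiv {v : V} {w : MvPolynomial V R} {m : V →₀ ℕ}
    (hm : m ∈ w.support) (hv : m v ≠ 0) : m - Finsupp.single v 1 ∈ (pderiv v w).support := by
  rwa [mem_support_pderiv_iff, Finsupp.sub_add_single_one_cancel hv]

lemma le_one_of_pderiv_pderiv_eq_zero {v : V} {w : MvPolynomial V R}
    (hw : pderiv v (pderiv v w) = 0) {m : V →₀ ℕ} (hm : m ∈ w.support) : m v ≤ 1 := by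
  by_contra! hv
  have hm' := sub_single_mem_support_pderiv (sub_single_mem_support_pderiv hm (v := v) (by lia))
    (v := v) (by simp; lia)
  simp [hw] at hm'

lemma eq_of_pderiv_eq {d : ℕ} (hd : d ≠ 0) {f g : MvPolynomial V R} (hf : f.IsHomogeneous d)
    (hg : g.IsHomogeneous d) (h : ∀ v, pderiv v f = pderiv v g) : f = g := by
  by_contra! hne
  obtain ⟨m, hm⟩ := ne_zero_iff.mp (sub_ne_zero.mpr hne)
  have hm0 : m ≠ 0 := by
    rintro rfl
    exact hd (by simpa using (hf.sub hg).degree_eq_sum_deg_support (mem_support_iff.mpr hm))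
  obtain ⟨v, hv⟩ := Finsupp.ne_iff.mp hm0
  have hm' := sub_single_mem_support_pderiv (mem_support_iff.mpr hm) hv
  simp [h v] at hm'

end PartialDerivativeSupport

section StressSpace

variable {V R : Type*} [CommRing R]

variable (R) in
/-- The polynomials all of whose monomials are supported on members of `Δ`. For a simplicial
complex `Δ` this is a linear complement of the Stanley–Reisner ideal. -/
noncomputable def faceSpace (Δ : Set (Finset V)) : Submodule R (MvPolynomial V R) :=
  restrictSupport R {m | m.support ∈ Δ}

/-- The space of `d`-stresses on `Δ`: homogeneous polynomials of degree `d` supported on members of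
`Δ` and annihilated by `∂_θ` for all `θ ∈ Θ`. -/
noncomputable def stressSpace (Δ : Set (Finset V)) (Θ : Set (V → R)) (d : ℕ) :
    Submodule R (MvPolynomial V R) :=
  homogeneousSubmodule V R d ⊓ faceSpace R Δ ⊓ ⨅ θ ∈ Θ, LinearMap.ker (dirDeriv θ).toLinearMap

variable {Δ : Set (Finset V)} {Θ : Set (V → R)} {d : ℕ} {w : MvPolynomial V R}

lemma mem_faceSpace_iff : w ∈ faceSpace R Δ ↔ ∀ m ∈ w.support, m.support ∈ Δ :=
  .rfl

lemma mem_stressSpace_iff :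
    w ∈ stressSpace Δ Θ d ↔
      w.IsHomogeneous d ∧ w ∈ faceSpace R Δ ∧ ∀ θ ∈ Θ, dirDeriv θ w = 0 := by
  simp [stressSpace, and_assoc]

lemma pderiv_mem_faceSpace (hΔ : IsLowerSet Δ) (hw : w ∈ faceSpace R Δ) (v : V) :
    pderiv v w ∈ faceSpace R Δ :=
  mem_faceSpace_iff.mpr fun _ hm =>
    hΔ (Finsupp.support_mono le_self_add) (hw (add_single_mem_support_of_mem_support_pderiv hm))

lemma X_mul_pderiv_mem_faceSpace (hw : w ∈ faceSpace R Δ) (v : V) :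
    X v * pderiv v w ∈ faceSpace R Δ :=
  mem_faceSpace_iff.mpr fun _ hm => hw (mem_support_of_mem_support_X_mul_pderiv hm)

lemma pderiv_pderiv_eq_zero_of_mem_faceSpace {u v : V} (huv : ∀ s ∈ Δ, v ∈ s → u ∉ s)
    (hw : w ∈ faceSpace R Δ) : pderiv u (pderiv v w) = 0 := by
  by_contra hne
  obtain ⟨m, hm⟩ := ne_zero_iff.mp hne
  have hface := hw (add_single_mem_support_of_mem_support_pderiv
    (add_single_mem_support_of_mem_support_pderiv (mem_support_iff.mpr hm)))
  exact huv _ hface (by simp) (by simp)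

lemma pderiv_mem_stressSpace (hΔ : IsLowerSet Δ) (hw : w ∈ stressSpace Δ Θ (d + 1)) (v : V) :
    pderiv v w ∈ stressSpace Δ Θ d := by
  rw [mem_stressSpace_iff] at hw ⊢
  obtain ⟨hhom, hface, hker⟩ := hw
  refine ⟨hhom.pderiv, pderiv_mem_faceSpace hΔ hface v, fun θ hθ => ?_⟩
  rw [dirDeriv_pderiv_comm, hker θ hθ, map_zero]

end StressSpace

section Antipode

variable {V R : Type*} [CommRing R] {α : V → V}

/-- A set of vertices is antipode-free if it contains no vertex together with its image under the
antipodal map `α`. -/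
def IsAntipodeFree (α : V → V) (s : Finset V) : Prop :=
  ∀ v ∈ s, α v ∉ s

/-- The boundary complex of the cross-polytope with vertices `s ∪ α(s)`, as the family of the
antipode-free sets of such vertices. -/
def crossPolytopeBoundary (α : V → V) (s : Finset V) : Set (Finset V) :=
  {t | (∀ v ∈ t, v ∈ s ∨ α v ∈ s) ∧ IsAntipodeFree α t}

variable (R) in
/-- The symmetric linear form `x_v + x_{-v}`. -/
noncomputable def antipodalSum (α : V → V) (v : V) : MvPolynomial V R :=
  X v + X (α v)

lemma antipodalSum_antipode (hα : α.Involutive) (v : V) :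
    antipodalSum R α (α v) = antipodalSum R α v := by
  rw [antipodalSum, antipodalSum, hα v, add_comm]

lemma rename_antipodalSum (hα : α.Involutive) (v : V) :
    rename α (antipodalSum R α v) = antipodalSum R α v := by
  simp only [antipodalSum, map_add, rename_X, hα v, add_comm]

lemma isHomogeneous_antipodalSum (v : V) : (antipodalSum R α v).IsHomogeneous 1 :=
  (isHomogeneous_X R v).add (isHomogeneous_X R (α v))

lemma dirDeriv_antipodalSum (θ : V → R) (v : V) :
    dirDeriv θ (antipodalSum R α v) = C (θ v + θ (α v)) := by
  simp [antipodalSum]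

lemma antipodalSum_ne_antipodalSum [CharZero R] (hα : α.Involutive) {p q : V} (hqp : q ≠ p)
    (hqp' : q ≠ α p) : antipodalSum R α p ≠ antipodalSum R α q := by
  classical
  intro h
  have hαq : α q ≠ p := fun e => hqp' (by rw [← e, hα q])
  have hαq' : α q ≠ α p := hα.injective.ne hqp
  have heval := congrArg (eval fun v => if v = p ∨ v = α p then (1 : R) else 0) h
  simp [antipodalSum, hqp, hqp', hαq, hαq', one_add_one_eq_two] at heval

end Antipode

section SymmetricStresses

variable {V R : Type*} [CommRing R] {α : V → V} {Δ : Set (Finset V)} {Θ : Set (V → R)}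
  {w : MvPolynomial V R}

lemma rename_pderiv_pderiv (hα : α.Involutive)
    (hw : ∀ v, rename α (pderiv v w) = pderiv v w) (u v : V) :
    rename α (pderiv u (pderiv v w)) = pderiv (α u) (pderiv v w) := by
  rw [← pderiv_rename hα.injective, hw]

lemma pderiv_antipode_pderiv_antipode (hα : α.Involutive)
    (hw : ∀ v, rename α (pderiv v w) = pderiv v w) (u v : V) :
    pderiv (α u) (pderiv (α v) w) = pderiv u (pderiv v w) := by
  rw [← rename_pderiv_pderiv hα hw, pderiv_pderiv_comm, ← rename_pderiv_pderiv hα hw,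
    pderiv_pderiv_comm, rename_rename, hα.comp_self, rename_id_apply]

lemma pderiv_pderiv_self_eq_zero (hα : α.Involutive) (hfree : ∀ s ∈ Δ, IsAntipodeFree α s)
    (hface : w ∈ faceSpace R Δ) (hw : ∀ v, rename α (pderiv v w) = pderiv v w) (v : V) :
    pderiv v (pderiv v w) = 0 := by
  apply rename_injective α hα.injective
  rw [rename_pderiv_pderiv hα hw, map_zero]
  exact pderiv_pderiv_eq_zero_of_mem_faceSpace (fun s hs => hfree s hs v) hface

lemma antipodalSum_mul_pderiv_pderiv_mem_faceSpace (hα : α.Involutive) (hΔ : IsLowerSet Δ)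
    (hface : w ∈ faceSpace R Δ) (hw : ∀ v, rename α (pderiv v w) = pderiv v w) (u v : V) :
    antipodalSum R α u * pderiv u (pderiv v w) ∈ faceSpace R Δ := by
  have hX (u v : V) : X u * pderiv u (pderiv v w) ∈ faceSpace R Δ :=
    X_mul_pderiv_mem_faceSpace (pderiv_mem_faceSpace hΔ hface v) u
  rw [antipodalSum, add_mul]
  refine add_mem (hX u v) ?_
  rw [← pderiv_antipode_pderiv_antipode hα hw]
  exact hX (α u) (α v)

lemma antipodalSum_sub_mul_mem_stressSpace (hα : α.Involutive) (hΔ : IsLowerSet Δ)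
    (hΘ : ∀ θ ∈ Θ, ∀ u v, θ u + θ (α u) = θ v + θ (α v)) {d : ℕ}
    (hstress : w ∈ stressSpace Δ Θ (d + 2)) (hw : ∀ v, rename α (pderiv v w) = pderiv v w)
    (p q : V) :
    (antipodalSum R α p - antipodalSum R α q) *
      (pderiv q (pderiv p w) - pderiv (α q) (pderiv p w)) ∈ stressSpace Δ Θ (d + 1) := by
  have hface := (mem_stressSpace_iff.mp hstress).2.1
  have hmul (u v : V) : (antipodalSum R α v - antipodalSum R α u) * pderiv u (pderiv v w)
      ∈ faceSpace R Δ := by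
    rw [sub_mul]
    refine sub_mem ?_ (antipodalSum_mul_pderiv_pderiv_mem_faceSpace hα hΔ hface hw u v)
    rw [pderiv_pderiv_comm]
    exact antipodalSum_mul_pderiv_pderiv_mem_faceSpace hα hΔ hface hw v u
  have hdiff : pderiv q (pderiv p w) - pderiv (α q) (pderiv p w) ∈ stressSpace Δ Θ d :=
    sub_mem (pderiv_mem_stressSpace hΔ (pderiv_mem_stressSpace hΔ hstress p) q)
      (pderiv_mem_stressSpace hΔ (pderiv_mem_stressSpace hΔ hstress p) (α q))
  obtain ⟨hhom, -, hker⟩ := mem_stressSpace_iff.mp hdiff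
  refine mem_stressSpace_iff.mpr ⟨?_, ?_, fun θ hθ => ?_⟩
  · rw [add_comm]
    exact ((isHomogeneous_antipodalSum p).sub (isHomogeneous_antipodalSum q)).mul hhom
  · rw [mul_sub]
    refine sub_mem (hmul q p) ?_
    rw [← antipodalSum_antipode hα q]
    exact hmul (α q) p
  · rw [Derivation.leibniz, hker θ hθ, map_sub, dirDeriv_antipodalSum, dirDeriv_antipodalSum,
      hΘ θ hθ p q, sub_self, smul_zero, smul_zero, add_zero]

variable [IsDomain R] [CharZero R]

lemma pderiv_antipode_pderiv_eq (hα : α.Involutive) (hΔ : IsLowerSet Δ)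
    (hΘ : ∀ θ ∈ Θ, ∀ u v, θ u + θ (α u) = θ v + θ (α v)) {d : ℕ}
    (hsym : ∀ f ∈ stressSpace Δ Θ (d + 1), rename α f = f)
    (hw : w ∈ stressSpace Δ Θ (d + 2)) {p q : V} (hqp : q ≠ p) (hqp' : q ≠ α p) :
    pderiv (α q) (pderiv p w) = pderiv q (pderiv p w) := by
  have hsym_pderiv (v : V) : rename α (pderiv v w) = pderiv v w :=
    hsym _ (pderiv_mem_stressSpace hΔ hw v)
  set z := antipodalSum R α p - antipodalSum R α q with hz
  set g := pderiv q (pderiv p w) - pderiv (α q) (pderiv p w) with hg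
  have z_symm : rename α z = z := by
    rw [hz, map_sub, rename_antipodalSum hα, rename_antipodalSum hα]
  have g_antisymm : rename α g = -g := by
    rw [hg, map_sub, rename_pderiv_pderiv hα hsym_pderiv, rename_pderiv_pderiv hα hsym_pderiv,
      hα q, neg_sub]
  have z_ne_zero : z ≠ 0 := sub_ne_zero.mpr (antipodalSum_ne_antipodalSum hα hqp hqp')
  have mul_symm : rename α (z * g) = z * g :=
    hsym _ (antipodalSum_sub_mul_mem_stressSpace hα hΔ hΘ hw hsym_pderiv p q)
  rw [map_mul, z_symm, g_antisymm] at mul_symm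
  have g_eq_zero : g = 0 := neg_eq_self.mp (mul_left_cancel₀ z_ne_zero mul_symm)
  exact (sub_eq_zero.mp g_eq_zero).symm

lemma pderiv_antipode_eq_of_symmetric (hα : α.Involutive) (hΔ : IsLowerSet Δ)
    (hfree : ∀ s ∈ Δ, IsAntipodeFree α s)
    (hΘ : ∀ θ ∈ Θ, ∀ u v, θ u + θ (α u) = θ v + θ (α v)) {d : ℕ}
    (hsym : ∀ f ∈ stressSpace Δ Θ (d + 1), rename α f = f)
    (hw : w ∈ stressSpace Δ Θ (d + 2)) (v : V) : pderiv (α v) w = pderiv v w := by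
  have hpderiv (v : V) : pderiv v w ∈ stressSpace Δ Θ (d + 1) := pderiv_mem_stressSpace hΔ hw v
  have hface : w ∈ faceSpace R Δ := (mem_stressSpace_iff.mp hw).2.1
  have pderiv_sq (u : V) : pderiv u (pderiv u w) = 0 :=
    pderiv_pderiv_self_eq_zero hα hfree hface (fun v => hsym _ (hpderiv v)) u
  have pderiv_antipode_pderiv (u : V) : pderiv (α u) (pderiv u w) = 0 :=
    pderiv_pderiv_eq_zero_of_mem_faceSpace (fun s hs => hfree s hs u) hface
  refine eq_of_pderiv_eq d.succ_ne_zero (mem_stressSpace_iff.mp (hpderiv (α v))).1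
    (mem_stressSpace_iff.mp (hpderiv v)).1 fun u => ?_
  rw [pderiv_pderiv_comm u, pderiv_pderiv_comm u]
  by_cases huv : v = u
  · rw [huv, pderiv_sq, pderiv_antipode_pderiv]
  by_cases huv' : v = α u
  · rw [huv', hα u, pderiv_sq, pderiv_antipode_pderiv]
  exact pderiv_antipode_pderiv_eq hα hΔ hΘ hsym hw huv huv'

lemma pderiv_antipode_eq_of_lt (hα : α.Involutive) (hΔ : IsLowerSet Δ)
    (hfree : ∀ s ∈ Δ, IsAntipodeFree α s)
    (hΘ : ∀ θ ∈ Θ, ∀ u v, θ u + θ (α u) = θ v + θ (α v)) {i j : ℕ} (hi : 0 < i) (hij : i < j)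
    (hsym : ∀ f ∈ stressSpace Δ Θ i, rename α f = f) (hw : w ∈ stressSpace Δ Θ j) (v : V) :
    pderiv (α v) w = pderiv v w := by
  obtain ⟨d, rfl⟩ := Nat.exists_eq_add_one_of_ne_zero hi.ne'
  induction j, hij using Nat.le_induction generalizing w with
  | base => exact pderiv_antipode_eq_of_symmetric hα hΔ hfree hΘ hsym hw v
  | succ j hj ih =>
    have hpderiv (u : V) : pderiv u w ∈ stressSpace Δ Θ j := pderiv_mem_stressSpace hΔ hw u
    refine eq_of_pderiv_eq (by lia) (mem_stressSpace_iff.mp (hpderiv (α v))).1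
      (mem_stressSpace_iff.mp (hpderiv v)).1 fun u => ?_
    rw [pderiv_pderiv_comm u, pderiv_pderiv_comm u, ih (hpderiv u)]

end SymmetricStresses

section CrossPolytope

variable {V : Type*} [DecidableEq V] {α : V → V}

lemma exists_subset_of_flip_mem (hα : α.Involutive) {F : Set (Finset V)}
    (hflip : ∀ s ∈ F, ∀ v ∈ s, insert (α v) (s.erase v) ∈ F) {s t : Finset V} (hs : s ∈ F)
    (ht : t ∈ crossPolytopeBoundary α s) : ∃ r ∈ F, t ⊆ r := by
  obtain ⟨hcover, hfree⟩ := ht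
  suffices ∃ r ∈ F, t ⊆ r ∧ ∀ v, v ∈ s ∨ α v ∈ s → v ∈ r ∨ α v ∈ r by
    obtain ⟨r, hr, htr, -⟩ := this
    exact ⟨r, hr, htr⟩
  induction t using Finset.induction_on with
  | empty => exact ⟨s, hs, Finset.empty_subset s, fun _ => id⟩
  | insert v t _ ih =>
    obtain ⟨r, hr, htr, hsr⟩ := ih (fun u hu => hcover u (Finset.mem_insert_of_mem hu))
      fun u hu hαu => hfree u (Finset.mem_insert_of_mem hu) (Finset.mem_insert_of_mem hαu)
    by_cases hvr : v ∈ r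
    · exact ⟨r, hr, Finset.insert_subset hvr htr, hsr⟩
    have hαvr : α v ∈ r := (hsr v (hcover v (Finset.mem_insert_self v t))).resolve_left hvr
    have hαvt : α v ∉ t := fun h =>
      hfree v (Finset.mem_insert_self v t) (Finset.mem_insert_of_mem h)
    have hflip_mem : insert v (r.erase (α v)) ∈ F := by
      simpa only [hα v] using hflip r hr (α v) hαvr
    refine ⟨insert v (r.erase (α v)), hflip_mem, ?_, fun u hu => ?_⟩
    · exact Finset.insert_subset_insert v (Finset.subset_erase.mpr ⟨htr, hαvt⟩)
    · simp only [Finset.mem_insert, Finset.mem_erase]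
      have := hsr u hu
      have := hα.eq_iff (x := u) (y := v)
      have := hα.injective.eq_iff (a := u) (b := v)
      grind only

end CrossPolytope

section SquarefreeSupport

variable {V R : Type*} [CommRing R] {α : V → V} {Δ : Set (Finset V)} {w : MvPolynomial V R}
  {m : V →₀ ℕ}

lemma card_support_of_le_one (hle : ∀ v, m v ≤ 1) {d : ℕ} (hhom : w.IsHomogeneous d)
    (hm : m ∈ w.support) : m.support.card = d := by
  rw [hhom.degree_eq_sum_deg_support hm, Finset.card_eq_sum_ones]
  refine Finset.sum_congr rfl fun v hv => le_antisymm ?_ (hle v)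
  exact Nat.one_le_iff_ne_zero.mpr (Finsupp.mem_support_iff.mp hv)

variable [IsDomain R] [CharZero R]

lemma le_one_of_mem_support (hfree : ∀ s ∈ Δ, IsAntipodeFree α s) (hface : w ∈ faceSpace R Δ)
    (hw : ∀ v, pderiv (α v) w = pderiv v w) (hm : m ∈ w.support) (v : V) : m v ≤ 1 := by
  refine le_one_of_pderiv_pderiv_eq_zero ?_ hm
  rw [← hw v, pderiv_pderiv_comm]
  exact pderiv_pderiv_eq_zero_of_mem_faceSpace (fun s hs => hfree s hs v) hface

lemma exists_mem_support_flip [DecidableEq V] (hw : ∀ v, pderiv (α v) w = pderiv v w)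
    (hm : m ∈ w.support) (hle : ∀ v, m v ≤ 1) {v : V} (hv : v ∈ m.support) :
    ∃ m' ∈ w.support, m'.support = insert (α v) (m.support.erase v) := by
  have hv0 : m v ≠ 0 := Finsupp.mem_support_iff.mp hv
  refine ⟨m - Finsupp.single v 1 + Finsupp.single (α v) 1, ?_, ?_⟩
  · rw [← mem_support_pderiv_iff, hw v]
    exact sub_single_mem_support_pderiv hm hv0
  · have support_sub : (m - Finsupp.single v 1).support = m.support.erase v := by
      ext u
      have := hle v
      by_cases huv : u = v
      · have : m v - 1 = 0 := by lia
        simp [huv, this]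
      · simp [huv]
    rw [Finsupp.support_add_eq_union, support_sub,
      Finsupp.support_single _ one_ne_zero, Finset.union_comm, Finset.insert_eq]

end SquarefreeSupport

theorem stmt_16_general {V R : Type*} [CommRing R] [IsDomain R] [CharZero R] {α : V → V}
    (hα : α.Involutive) {Δ : Set (Finset V)} (hΔ : IsLowerSet Δ)
    (hfree : ∀ s ∈ Δ, IsAntipodeFree α s) {Θ : Set (V → R)}
    (hΘ : ∀ θ ∈ Θ, ∀ u v, θ u + θ (α u) = θ v + θ (α v)) {i j : ℕ} (hi : 0 < i) (hij : i < j)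
    (hsym : ∀ f ∈ stressSpace Δ Θ i, rename α f = f)
    (hne : ∃ w ∈ stressSpace Δ Θ j, w ≠ 0) :
    ∃ s ∈ Δ, s.card = j ∧ crossPolytopeBoundary α s ⊆ Δ := by
  classical
  obtain ⟨w, hw, hw0⟩ := hne
  obtain ⟨hhom, hface, -⟩ := mem_stressSpace_iff.mp hw
  have hpderiv := pderiv_antipode_eq_of_lt hα hΔ hfree hΘ hi hij hsym hw
  have hle {m : V →₀ ℕ} (hm : m ∈ w.support) := le_one_of_mem_support hfree hface hpderiv hm
  obtain ⟨m, hm⟩ := support_nonempty.mpr hw0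
  refine ⟨m.support, hface hm, card_support_of_le_one (hle hm) hhom hm, fun t ht => ?_⟩
  have hflip : ∀ s ∈ Finsupp.support '' (w.support : Set (V →₀ ℕ)), ∀ v ∈ s,
      insert (α v) (s.erase v) ∈ Finsupp.support '' (w.support : Set (V →₀ ℕ)) := by
    rintro _ ⟨m', hm', rfl⟩ v hv
    exact exists_mem_support_flip hpderiv hm' (hle hm') hv
  obtain ⟨_, ⟨m', hm', rfl⟩, htm'⟩ := exists_subset_of_flip_mem hα hflip ⟨m, hm, rfl⟩ ht
  exact hΔ htm' (hface hm')

section SignedVertices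

/-- The antipodal map on `±ι`, encoded as `ι × Bool`. -/
abbrev antipode {ι : Type*} (v : ι × Bool) : ι × Bool :=
  (v.1, !v.2)

variable {ι : Type*}

lemma antipode_involutive : (antipode (ι := ι)).Involutive := fun v =>
  Prod.ext rfl (Bool.not_not v.2)

lemma isAntipodeFree_antipode_iff {s : Finset (ι × Bool)} :
    IsAntipodeFree antipode s ↔ ∀ k, ¬((k, true) ∈ s ∧ (k, false) ∈ s) := by
  refine ⟨fun h k hk => h (k, true) hk.1 hk.2, fun h v hv hv' => ?_⟩
  rcases v with ⟨k, _ | _⟩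
  · exact h k ⟨hv', hv⟩
  · exact h k ⟨hv, hv'⟩

lemma eq_or_eq_antipode_of_fst_eq {u v : ι × Bool} (h : u.1 = v.1) : u = v ∨ u = antipode v := by
  rcases u with ⟨k, _ | _⟩ <;> rcases v with ⟨l, _ | _⟩ <;> simp_all

lemma card_image_fst_of_isAntipodeFree [DecidableEq ι] {s : Finset (ι × Bool)}
    (hs : IsAntipodeFree antipode s) : (s.image Prod.fst).card = s.card :=
  Finset.card_image_of_injOn fun _ hu v hv huv =>
    (eq_or_eq_antipode_of_fst_eq huv).resolve_right fun h => hs v hv (h ▸ hu)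

lemma fst_mem_image_fst_iff [DecidableEq ι] {s : Finset (ι × Bool)} {v : ι × Bool} :
    v.1 ∈ s.image Prod.fst ↔ v ∈ s ∨ antipode v ∈ s := by
  rw [Finset.mem_image]
  constructor
  · rintro ⟨u, hu, huv⟩
    rcases eq_or_eq_antipode_of_fst_eq huv with rfl | rfl
    · exact .inl hu
    · exact .inr hu
  · rintro (hv | hv)
    · exact ⟨v, hv, rfl⟩
    · exact ⟨antipode v, hv, rfl⟩

lemma mem_crossPolytopeBoundary_antipode_iff [DecidableEq ι] {s t : Finset (ι × Bool)} :
    t ∈ crossPolytopeBoundary antipode s ↔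
      (∀ v ∈ t, v.1 ∈ s.image Prod.fst) ∧ ∀ k, ¬((k, true) ∈ t ∧ (k, false) ∈ t) :=
  and_congr (forall₂_congr fun _ _ => fst_mem_image_fst_iff.symm) isAntipodeFree_antipode_iff

lemma isAntipodeFree_of_image_ne [DecidableEq ι] {Δ : Set (Finset (ι × Bool))} (hΔ : IsLowerSet Δ)
    (hne : ∀ s ∈ Δ, s ≠ ∅ → s.image antipode ≠ s) : ∀ s ∈ Δ, IsAntipodeFree antipode s := by
  intro s hs v hv hαv
  refine hne {v, antipode v} (hΔ ?_ hs) (Finset.insert_ne_empty _ _) ?_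
  · exact Finset.insert_subset hv (Finset.singleton_subset_iff.mpr hαv)
  · rw [Finset.image_insert, Finset.image_singleton, antipode_involutive v, Finset.pair_comm]

lemma isStress_iff_mem_stressSpace {n ℓ j : ℕ} {Δ : Finset (Finset (Fin n × Bool))}
    {Θ : Fin ℓ → (Fin n × Bool) → ℝ} {w : MvPolynomial (Fin n × Bool) ℝ} :
    IsStress n ℓ j Δ Θ w ↔ w ∈ stressSpace (Δ : Set (Finset (Fin n × Bool))) (Set.range Θ) j := by
  simp [IsStress, mem_stressSpace_iff, mem_faceSpace_iff, dirDeriv_eq_Dop]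

end SignedVertices

/-- with `Θ` as in the main theorem, if for some `i > 1` all
`i`-stresses on `Δ` are symmetric and there is a nonzero `j`-stress for some
`j > i`, then `Δ` contains the boundary complex of the `j`-cross-polytope as a
subcomplex: there are `j` distinct indices `k_1, …, k_j` such that every subset
of `{±k_1, …, ±k_j}` with no antipodal pair is a face of `Δ`. -/
theorem stmt_16 (n ℓ i j : ℕ) (hi : 1 < i) (hij : i < j)
    (Δ : Finset (Finset (Fin n × Bool)))
    (hdown : ∀ s ∈ Δ, ∀ t ⊆ s, t ∈ Δ)
    (hmap : ∀ s ∈ Δ, s.image (fun u : Fin n × Bool => (u.1, !u.2)) ∈ Δ)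
    (hfacefree : ∀ s ∈ Δ, s ≠ ∅ → s.image (fun u : Fin n × Bool => (u.1, !u.2)) ≠ s)
    (Θ : Fin ℓ → (Fin n × Bool) → ℝ)
    (hΘ : ∀ k : Fin ℓ, (∀ v : Fin n × Bool, Θ k (v.1, !v.2) = - Θ k v) ∨
                       ((k : ℕ) = ℓ - 1 ∧ ∀ v : Fin n × Bool, Θ k v = 1))
    (hsym : ∀ w, IsStress n ℓ i Δ Θ w →
      rename (fun v : Fin n × Bool => (v.1, !v.2)) w = w)
    (hnz : ∃ w, IsStress n ℓ j Δ Θ w ∧ w ≠ 0) :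
    ∃ T : Finset (Fin n), T.card = j ∧
      ∀ S : Finset (Fin n × Bool), (∀ v ∈ S, v.1 ∈ T) →
        (∀ k : Fin n, ¬((k, true) ∈ S ∧ (k, false) ∈ S)) → S ∈ Δ := by
  have hΔ : IsLowerSet (Δ : Set (Finset (Fin n × Bool))) := fun s t hts hs => hdown s hs t hts
  have hfree := isAntipodeFree_of_image_ne hΔ hfacefree
  have hΘ_sum : ∀ θ ∈ Set.range Θ, ∀ u v, θ u + θ (antipode u) = θ v + θ (antipode v) := by
    rintro _ ⟨k, rfl⟩ u v
    rcases hΘ k with hanti | ⟨-, hone⟩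
    · simp only [hanti, add_neg_cancel]
    · simp only [hone]
  simp only [isStress_iff_mem_stressSpace] at hsym hnz
  obtain ⟨s, hs, hcard, hsub⟩ := stmt_16_general antipode_involutive hΔ hfree hΘ_sum
    (zero_lt_one.trans hi) hij hsym hnz
  refine ⟨s.image Prod.fst, ?_, fun S hS hS' => ?_⟩
  · rw [card_image_fst_of_isAntipodeFree (hfree s hs), hcard]
  · exact hsub (mem_crossPolytopeBoundary_antipode_iff.mpr ⟨hS, hS'⟩)
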